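/- arXiv:2505.23459 — 10 statements merged into one kernel-verified Lean document; each statement's English description precedes it below -/
import Mathlib

section
/- Let (w_r)_{r≥0} be a sequence of nonnegative real numbers and let κ > 0, B > 0. Assume that for all r ≥ 0, w_{r+1} ≤ w_r − κ·w_r² + B. Then for every integer r ≥ 0, w_r ≤ √(B/κ) + B + w_0/(1 + κ·r·w_0). -/
/-- Let `(w r)` be a sequence of nonnegative reals and `κ > 0`, `B > 0`.
If `w (r+1) ≤ w r - κ * (w r)^2 + B` for all `r`, then for every `r`,
`w r ≤ √(B/κ) + B + w 0 / (1 + κ * r * w 0)`. -/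
theorem stmt0 (w : ℕ → ℝ) (κ B : ℝ) (hκ : 0 < κ) (hB : 0 < B)
    (hw : ∀ r : ℕ, 0 ≤ w r)
    (hrec : ∀ r : ℕ, w (r + 1) ≤ w r - κ * (w r) ^ 2 + B) :
    ∀ r : ℕ, w r ≤ Real.sqrt (B / κ) + B + w 0 / (1 + κ * (r : ℝ) * w 0) := by
  have hs0 : 0 ≤ Real.sqrt (B / κ) := Real.sqrt_nonneg _
  have hs2 : κ * Real.sqrt (B / κ) ^ 2 = B := by
    rw [Real.sq_sqrt (by positivity)]
    field_simp
  set s := Real.sqrt (B / κ) with hs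
  have h0 := hw 0
  have key : ∀ r : ℕ, w r ≤ s + B ∨ w r ≤ s + w 0 / (1 + κ * (r : ℝ) * w 0) := by
    intro r
    induction r with
    | zero => right; simp; exact hs0
    | succ r ih =>
      have hr := hrec r
      have hwr := hw r
      rcases le_or_gt (w r) s with h | h
      · left
        have : 0 ≤ κ * w r ^ 2 := by positivity
        linarith
      · have hdec : κ * s ^ 2 ≤ κ * w r ^ 2 := by gcongr
        rcases ih with h1 | h1
        · left
          linarith
        · right
          push_cast
          have hD : 0 < 1 + κ * (r : ℝ) * w 0 := by positivity
          obtain ⟨u, hu⟩ : ∃ u, u = w r - s := ⟨_, rfl⟩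
          have hu0 : 0 < u := by linarith
          have hua : u ≤ w 0 / (1 + κ * (r : ℝ) * w 0) := by linarith
          rw [le_div_iff₀ hD] at hua
          have e1 : u - κ * u ^ 2 ≤ u / (1 + κ * u) := by
            rw [le_div_iff₀ (by positivity)]
            have : 0 ≤ κ ^ 2 * u ^ 3 := by positivity
            nlinarith
          have e2 : u / (1 + κ * u) ≤ w 0 / (1 + κ * ((r : ℝ) + 1) * w 0) := by
            rw [div_le_div_iff₀ (by positivity) (by positivity)]
            nlinarith
          have e3 : w (r + 1) ≤ s + (u - κ * u ^ 2) := by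
            have hwu : w r = u + s := by linarith
            rw [hwu] at hr
            have : 0 ≤ κ * (s * u) := by positivity
            nlinarith
          linarith
  intro r
  have hp : 0 ≤ w 0 / (1 + κ * (r : ℝ) * w 0) := by positivity
  rcases key r with h | h <;> linarith
end

section
/- Let d ≥ 1, M ≥ 1, and let f_1, …, f_M : ℝ^d → ℝ be differentiable functions, each bounded above, with f_c^* = sup_{θ'} f_c(θ'). Define F = (1/M)·Σ_{c=1}^M f_c and F^* = sup_{θ'} F(θ'). Fix θ ∈ ℝ^d, ζ ≥ 0 and nonnegative constants μ_1, …, μ_M. If for every c ∈ {1,…,M} one has ‖∇f_c(θ)‖₂² ≥ 2·μ_c·(f_c^* − f_c(θ))² and ‖∇F(θ) − ∇f_c(θ)‖₂ ≤ ζ, then ζ² + ‖∇F(θ)‖₂² ≥ (min_c μ_c)·(F^* − F(θ))². -/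
open scoped BigOperators

/-- Relaxed non-uniform Łojasiewicz inequality (squared gap) for the average
of `M` local objectives under bounded gradient heterogeneity. -/
theorem stmt1 (d M : ℕ) (hd : 1 ≤ d) (hM : 1 ≤ M)
    (f : Fin M → EuclideanSpace ℝ (Fin d) → ℝ)
    (hdiff : ∀ c, Differentiable ℝ (f c))
    (hbdd : ∀ c, BddAbove (Set.range (f c)))
    (θ : EuclideanSpace ℝ (Fin d)) (ζ : ℝ) (hζ : 0 ≤ ζ)
    (μ : Fin M → ℝ) (hμ : ∀ c, 0 ≤ μ c)
    (hPL : ∀ c, ‖gradient (f c) θ‖ ^ 2 ≥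
      2 * μ c * (sSup (Set.range (f c)) - f c θ) ^ 2)
    (hhet : ∀ c,
      ‖gradient (fun x => (1 / (M : ℝ)) * ∑ c', f c' x) θ - gradient (f c) θ‖ ≤ ζ) :
    ζ ^ 2 + ‖gradient (fun x => (1 / (M : ℝ)) * ∑ c', f c' x) θ‖ ^ 2 ≥
      (Finset.univ.inf' ⟨⟨0, hM⟩, Finset.mem_univ _⟩ μ) *
        (sSup (Set.range (fun x => (1 / (M : ℝ)) * ∑ c', f c' x)) -
          (1 / (M : ℝ)) * ∑ c', f c' θ) ^ 2 := by
  have hM0 : (0 : ℝ) < M := by exact_mod_cast hM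
  have hne : (Finset.univ : Finset (Fin M)).Nonempty := ⟨⟨0, hM⟩, Finset.mem_univ _⟩
  have hle : ∀ x, (1 / (M : ℝ)) * ∑ c', f c' x ≤
      (1 / (M : ℝ)) * ∑ c', sSup (Set.range (f c')) := by
    intro x
    apply mul_le_mul_of_nonneg_left _ (by positivity)
    exact Finset.sum_le_sum fun c _ => le_csSup (hbdd c) ⟨x, rfl⟩
  have hsup : sSup (Set.range (fun x => (1 / (M : ℝ)) * ∑ c', f c' x)) ≤
      (1 / (M : ℝ)) * ∑ c', sSup (Set.range (f c')) := by
    apply csSup_le (Set.range_nonempty _)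
    rintro _ ⟨x, rfl⟩
    exact hle x
  have hge : (1 / (M : ℝ)) * ∑ c', f c' θ ≤
      sSup (Set.range (fun x => (1 / (M : ℝ)) * ∑ c', f c' x)) := by
    refine le_csSup ⟨(1 / (M : ℝ)) * ∑ c', sSup (Set.range (f c')), ?_⟩ ⟨θ, rfl⟩
    rintro _ ⟨x, rfl⟩
    exact hle x
  generalize sSup (Set.range (fun x => (1 / (M : ℝ)) * ∑ c', f c' x)) = S at *
  generalize gradient (fun x => (1 / (M : ℝ)) * ∑ c', f c' x) θ = G at *
  obtain ⟨c, -, hc⟩ : ∃ c ∈ (Finset.univ : Finset (Fin M)),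
      S - (1 / (M : ℝ)) * ∑ c', f c' θ ≤ sSup (Set.range (f c)) - f c θ := by
    apply Finset.exists_le_of_sum_le hne
    rw [Finset.sum_const, Finset.card_univ, Fintype.card_fin, nsmul_eq_mul,
      Finset.sum_sub_distrib]
    have h1 := mul_le_mul_of_nonneg_left hsup hM0.le
    have h2 : ∀ t : ℝ, (M : ℝ) * (1 / (M : ℝ) * t) = t := by
      intro t
      field_simp
    rw [h2] at h1
    rw [mul_sub, h2]
    linarith
  have hinf : Finset.univ.inf' ⟨⟨0, hM⟩, Finset.mem_univ _⟩ μ ≤ μ c :=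
    Finset.inf'_le _ (Finset.mem_univ c)
  have hsq : (S - (1 / (M : ℝ)) * ∑ c', f c' θ) ^ 2 ≤
      (sSup (Set.range (f c)) - f c θ) ^ 2 :=
    pow_le_pow_left₀ (sub_nonneg.2 hge) hc 2
  have hprod := mul_le_mul hinf hsq (sq_nonneg _) (hμ c)
  have htri : ‖gradient (f c) θ‖ ≤ ‖G‖ + ζ := by
    have h1 := norm_sub_norm_le (gradient (f c) θ) G
    rw [norm_sub_rev] at h1
    linarith [hhet c]
  have h3 := pow_le_pow_left₀ (norm_nonneg _) htri 2
  have h4 := hPL c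
  nlinarith [sq_nonneg (‖G‖ - ζ)]
end

section
/- Let d ≥ 1, M ≥ 1, and let f_1, …, f_M : ℝ^d → ℝ be differentiable functions, each bounded above, with f_c^* = sup_{θ'} f_c(θ'). Define F = (1/M)·Σ_{c=1}^M f_c and F^* = sup_{θ'} F(θ'). Fix θ ∈ ℝ^d, ζ ≥ 0 and nonnegative constants μ_1, …, μ_M. If for every c ∈ {1,…,M} one has ‖∇f_c(θ)‖₂² ≥ 2·μ_c·(f_c^* − f_c(θ)) and ‖∇F(θ) − ∇f_c(θ)‖₂² ≤ ζ², then ζ² + ‖∇F(θ)‖₂² ≥ 2·(min_c μ_c)·(F^* − F(θ)). -/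
open scoped BigOperators

/-- Relaxed non-uniform Polyak–Łojasiewicz inequality (linear gap) for the
average of `M` local objectives under bounded gradient heterogeneity. -/
theorem stmt2 (d M : ℕ) (hd : 1 ≤ d) (hM : 1 ≤ M)
    (f : Fin M → EuclideanSpace ℝ (Fin d) → ℝ)
    (hdiff : ∀ c, Differentiable ℝ (f c))
    (hbdd : ∀ c, BddAbove (Set.range (f c)))
    (θ : EuclideanSpace ℝ (Fin d)) (ζ : ℝ) (hζ : 0 ≤ ζ)
    (μ : Fin M → ℝ) (hμ : ∀ c, 0 ≤ μ c)
    (hPL : ∀ c, ‖gradient (f c) θ‖ ^ 2 ≥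
      2 * μ c * (sSup (Set.range (f c)) - f c θ))
    (hhet : ∀ c,
      ‖gradient (fun x => (1 / (M : ℝ)) * ∑ c', f c' x) θ - gradient (f c) θ‖ ^ 2 ≤ ζ ^ 2) :
    ζ ^ 2 + ‖gradient (fun x => (1 / (M : ℝ)) * ∑ c', f c' x) θ‖ ^ 2 ≥
      2 * (Finset.univ.inf' ⟨⟨0, hM⟩, Finset.mem_univ _⟩ μ) *
        (sSup (Set.range (fun x => (1 / (M : ℝ)) * ∑ c', f c' x)) -
          (1 / (M : ℝ)) * ∑ c', f c' θ) := by
  have hM0 : (0 : ℝ) < M := by exact_mod_cast hM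
  have : Nonempty (Fin M) := ⟨⟨0, hM⟩⟩
  have hgrad : gradient (fun x => (1 / (M : ℝ)) * ∑ c', f c' x) θ
      = (1 / (M : ℝ)) • ∑ c, gradient (f c) θ := by
    apply HasGradientAt.gradient
    rw [hasGradientAt_iff_hasFDerivAt]
    have h1 : ∀ c ∈ (Finset.univ : Finset (Fin M)), HasFDerivAt (f c)
        ((InnerProductSpace.toDual ℝ (EuclideanSpace ℝ (Fin d))) (gradient (f c) θ)) θ :=
      fun c _ => ((hdiff c) θ).hasGradientAt.hasFDerivAt
    have h2 := (HasFDerivAt.fun_sum h1).const_mul (1 / (M : ℝ))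
    rw [map_smulₛₗ, map_sum]
    exact h2
  set G := gradient (fun x => (1 / (M : ℝ)) * ∑ c', f c' x) θ with hG
  have hsum : ∑ c, gradient (f c) θ = (M : ℝ) • G := by
    rw [hgrad, smul_smul, mul_one_div_cancel hM0.ne', one_smul]
  set m := Finset.univ.inf' ⟨⟨0, hM⟩, Finset.mem_univ _⟩ μ with hm
  have hm0 : 0 ≤ m := Finset.le_inf' _ _ (fun c _ => hμ c)
  have hmle : ∀ c, m ≤ μ c := fun c => Finset.inf'_le _ (Finset.mem_univ c)
  have hle : ∀ c x, f c x ≤ sSup (Set.range (f c)) := fun c x =>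
    le_csSup (hbdd c) ⟨x, rfl⟩
  have hsup : sSup (Set.range (fun x => (1 / (M : ℝ)) * ∑ c', f c' x))
      ≤ (1 / (M : ℝ)) * ∑ c, sSup (Set.range (f c)) := by
    apply csSup_le (Set.range_nonempty _)
    rintro _ ⟨x, rfl⟩
    exact mul_le_mul_of_nonneg_left (Finset.sum_le_sum fun c _ => hle c x) (by positivity)
  have hpt : ∀ c, 2 * m * (sSup (Set.range (f c)) - f c θ)
      ≤ ζ ^ 2 - ‖G‖ ^ 2 + 2 * inner ℝ G (gradient (f c) θ) := by
    intro c
    have a := hhet c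
    rw [norm_sub_sq_real] at a
    have b := hPL c
    have e := mul_le_mul_of_nonneg_right (hmle c) (sub_nonneg.2 (hle c θ))
    linarith
  have htot := Finset.sum_le_sum (fun c (_ : c ∈ (Finset.univ : Finset (Fin M))) => hpt c)
  rw [← Finset.mul_sum, Finset.sum_sub_distrib, Finset.sum_add_distrib, ← Finset.mul_sum,
    ← inner_sum, hsum, inner_smul_right, real_inner_self_eq_norm_sq] at htot
  simp only [Finset.sum_const, Finset.card_univ, Fintype.card_fin, nsmul_eq_mul] at htot
  have h3 : 2 * m * ((1 / (M : ℝ)) * (∑ c, sSup (Set.range (f c)) - ∑ c, f c θ))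
      ≤ ζ ^ 2 + ‖G‖ ^ 2 := by
    have h4 := mul_le_mul_of_nonneg_left htot (one_div_pos.2 hM0).le
    have h5 : (1 / (M : ℝ)) * (M * (ζ ^ 2 - ‖G‖ ^ 2) + 2 * (M * ‖G‖ ^ 2))
        = ζ ^ 2 + ‖G‖ ^ 2 := by
      field_simp
      ring
    linarith
  have h6 := mul_le_mul_of_nonneg_left hsup (by positivity : 0 ≤ 2 * m)
  linarith
end

section
/- Let S and A be nonempty finite sets. For every θ, u, v ∈ ℝ^{S×A} and every (s,a) ∈ S×A, the second directional derivative of θ ↦ π_θ(a|s) satisfies |d²π_θ[u,v](a|s)| ≤ 8·π_θ(a|s)·‖u‖_∞·‖v‖_∞. -/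
open scoped BigOperators

/-- The softmax policy `π_θ(a|s) = exp θ(s,a) / Σ_{a'} exp θ(s,a')`. -/
noncomputable def softmax {S A : Type*} [Fintype A] (θ : S × A → ℝ) (s : S) (a : A) : ℝ :=
  Real.exp (θ (s, a)) / ∑ a' : A, Real.exp (θ (s, a'))

lemma sm_hasFDerivAt {S A : Type*} [Fintype S] [Fintype A] [Nonempty A]
    (θ : S × A → ℝ) (s : S) (a : A) :
    HasFDerivAt (fun θ' : S × A → ℝ => softmax θ' s a)
      (softmax θ s a • (ContinuousLinearMap.proj (R := ℝ) (φ := fun _ : S × A => ℝ) (s, a)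
        - ∑ b : A, softmax θ s b •
          ContinuousLinearMap.proj (R := ℝ) (φ := fun _ : S × A => ℝ) (s, b))) θ := by
  have hpos : 0 < ∑ b : A, Real.exp (θ (s, b)) :=
    Finset.sum_pos (fun _ _ => Real.exp_pos _) Finset.univ_nonempty
  have he : ∀ b : A, HasFDerivAt (fun θ' : S × A → ℝ => Real.exp (θ' (s, b)))
      (Real.exp (θ (s, b)) •
        ContinuousLinearMap.proj (R := ℝ) (φ := fun _ : S × A => ℝ) (s, b)) θ := fun b =>
    (ContinuousLinearMap.proj (R := ℝ) (φ := fun _ : S × A => ℝ) (s, b)).hasFDerivAt.exp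
  have hs := HasFDerivAt.fun_sum (u := Finset.univ) (fun b _ => he b)
  have h := (he a).fun_mul ((hasDerivAt_inv hpos.ne').comp_hasFDerivAt θ hs)
  simp only [softmax, div_eq_mul_inv]
  refine HasFDerivAt.congr_fderiv h ?_
  ext w
  simp only [← div_eq_mul_inv, Function.comp_apply, ContinuousLinearMap.add_apply, ContinuousLinearMap.smul_apply, ContinuousLinearMap.sub_apply,
    ContinuousLinearMap.sum_apply, ContinuousLinearMap.proj_apply, smul_eq_mul]
  have : ∑ b : A, Real.exp (θ (s, b)) / (∑ a' : A, Real.exp (θ (s, a'))) * w (s, b)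
      = (∑ b : A, Real.exp (θ (s, b)) * w (s, b)) / ∑ a' : A, Real.exp (θ (s, a')) := by
    rw [Finset.sum_div]
    exact Finset.sum_congr rfl fun b _ => by ring
  rw [this]
  field_simp
  try ring

lemma sm_contDiff {S A : Type*} [Fintype S] [Fintype A] [Nonempty A] (s : S) (a : A) :
    ContDiff ℝ 2 (fun θ' : S × A → ℝ => softmax θ' s a) := by
  unfold softmax
  refine ContDiff.div (by fun_prop) (by fun_prop) fun θ => ?_
  exact (Finset.sum_pos (fun _ _ => Real.exp_pos _) Finset.univ_nonempty).ne'

lemma sm_nonneg {S A : Type*} [Fintype A] (θ : S × A → ℝ) (s : S) (a : A) :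
    0 ≤ softmax θ s a := by
  unfold softmax; positivity

lemma sm_sum {S A : Type*} [Fintype A] [Nonempty A] (θ : S × A → ℝ) (s : S) :
    ∑ a : A, softmax θ s a = 1 := by
  unfold softmax
  rw [← Finset.sum_div]
  exact div_self (Finset.sum_pos (fun _ _ => Real.exp_pos _) Finset.univ_nonempty).ne'

lemma sm_avg {S A : Type*} [Fintype A] [Nonempty A] (θ : S × A → ℝ) (s : S)
    (f : A → ℝ) (C : ℝ) (hf : ∀ b, |f b| ≤ C) : |∑ b : A, softmax θ s b * f b| ≤ C := by
  calc |∑ b : A, softmax θ s b * f b| ≤ ∑ b : A, |softmax θ s b * f b| :=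
        Finset.abs_sum_le_sum_abs _ _
    _ ≤ ∑ b : A, softmax θ s b * C := by
        refine Finset.sum_le_sum fun b _ => ?_
        rw [abs_mul, abs_of_nonneg (sm_nonneg θ s b)]
        exact mul_le_mul_of_nonneg_left (hf b) (sm_nonneg θ s b)
    _ = C := by rw [← Finset.sum_mul, sm_sum, one_mul]

/-- Bound for the second directional derivative of the softmax policy.
The sup norm `‖u‖_∞` is the norm of the Pi type `S × A → ℝ`. -/
theorem stmt4 {S A : Type*} [Fintype S] [Fintype A] [Nonempty S] [Nonempty A]
    (θ u v : S × A → ℝ) (s : S) (a : A) :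
    |iteratedFDeriv ℝ 2 (fun θ' => softmax θ' s a) θ ![u, v]| ≤
      8 * softmax θ s a * ‖u‖ * ‖v‖ := by
  have hd : DifferentiableAt ℝ (fderiv ℝ (fun θ' : S × A → ℝ => softmax θ' s a)) θ :=
    (((sm_contDiff s a).fderiv_right (m := 1) (by norm_num)).differentiable (by norm_num)) θ
  have h1 : HasFDerivAt (fun θ' => fderiv ℝ (fun θ' : S × A → ℝ => softmax θ' s a) θ' v)
      ((ContinuousLinearMap.apply ℝ ℝ v).comp
        (fderiv ℝ (fderiv ℝ (fun θ' : S × A → ℝ => softmax θ' s a)) θ)) θ :=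
    (ContinuousLinearMap.apply ℝ ℝ v).hasFDerivAt.comp θ hd.hasFDerivAt
  have hfun : (fun θ' => fderiv ℝ (fun θ' : S × A → ℝ => softmax θ' s a) θ' v)
      = fun θ' => softmax θ' s a * (v (s, a) - ∑ b : A, softmax θ' s b * v (s, b)) := by
    funext θ'
    rw [(sm_hasFDerivAt θ' s a).fderiv]
    simp
  rw [hfun] at h1
  have h2 := (sm_hasFDerivAt θ s a).fun_mul
    ((HasFDerivAt.fun_sum (u := Finset.univ)
      (fun b _ => (sm_hasFDerivAt θ s b).mul_const (v (s, b)))).const_sub (v (s, a)))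
  have h3 := congrArg (fun L => L u) (h1.unique h2)
  rw [iteratedFDeriv_two_apply]
  simp only [ContinuousLinearMap.comp_apply, ContinuousLinearMap.apply_apply,
    ContinuousLinearMap.smul_apply, ContinuousLinearMap.sub_apply, ContinuousLinearMap.add_apply,
    ContinuousLinearMap.neg_apply,
    ContinuousLinearMap.sum_apply, ContinuousLinearMap.proj_apply, smul_eq_mul] at h3
  simp only [Matrix.cons_val_zero, Matrix.cons_val_one]
  rw [h3]
  have hu : ∀ b, |u (s, b)| ≤ ‖u‖ := fun b => norm_le_pi_norm u (s, b)
  have hv : ∀ b, |v (s, b)| ≤ ‖v‖ := fun b => norm_le_pi_norm v (s, b)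
  have hU := sm_avg θ s (fun b => u (s, b)) _ hu
  have hV := sm_avg θ s (fun b => v (s, b)) _ hv
  set U := ∑ b : A, softmax θ s b * u (s, b)
  set V := ∑ b : A, softmax θ s b * v (s, b)
  have key : ∀ x y : ℝ, |x| ≤ ‖u‖ → |y| ≤ ‖u‖ → |x - y| ≤ 2 * ‖u‖ := fun x y hx hy =>
    (abs_sub x y).trans (by linarith)
  have hW := sm_avg θ s (fun b => v (s, b) * (u (s, b) - U)) (‖v‖ * (2 * ‖u‖)) (fun b => by
    rw [abs_mul]
    exact mul_le_mul (hv b) (key _ _ (hu b) hU) (abs_nonneg _) (norm_nonneg _))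
  have hsum : ∑ b : A, v (s, b) * (softmax θ s b * (u (s, b) - U))
      = ∑ b : A, softmax θ s b * (v (s, b) * (u (s, b) - U)) :=
    Finset.sum_congr rfl fun b _ => by ring
  rw [hsum]
  set W := ∑ b : A, softmax θ s b * (v (s, b) * (u (s, b) - U))
  have hT : |(v (s, a) - V) * (u (s, a) - U)| ≤ (2 * ‖v‖) * (2 * ‖u‖) := by
    rw [abs_mul]
    refine mul_le_mul ((abs_sub _ _).trans ?_) (key _ _ (hu a) hU) (abs_nonneg _) (by positivity)
    linarith [hv a]
  have hfin : |(v (s, a) - V) * (u (s, a) - U) - W| ≤ 8 * ‖u‖ * ‖v‖ := by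
    refine (abs_sub _ _).trans ?_
    nlinarith [mul_nonneg (norm_nonneg u) (norm_nonneg v)]
  have hp := sm_nonneg θ s a
  calc _ = |softmax θ s a * ((v (s, a) - V) * (u (s, a) - U) - W)| := by congr 1; ring
    _ = softmax θ s a * |(v (s, a) - V) * (u (s, a) - U) - W| := by
        rw [abs_mul, abs_of_nonneg hp]
    _ ≤ softmax θ s a * (8 * ‖u‖ * ‖v‖) := mul_le_mul_of_nonneg_left hfin hp
    _ = _ := by ring
end

section
/- Let S and A be nonempty finite sets. For every θ, u, v, w ∈ ℝ^{S×A} and every (s,a) ∈ S×A, the third directional derivative of θ ↦ π_θ(a|s) satisfies |d³π_θ[u,v,w](a|s)| ≤ 48·π_θ(a|s)·‖u‖_∞·‖v‖_∞·‖w‖_∞. -/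
open scoped BigOperators

lemma step_aux {E : Type*} [NormedAddCommGroup E] [NormedSpace ℝ E] {f : E → ℝ}
    (hf : ContDiff ℝ 3 f) {n : ℕ} (hn : n < 3) (m : Fin n → E) (G : E → ℝ)
    (hG : ∀ y, iteratedFDeriv ℝ n f y m = G y) (x u : E) (G' : ℝ)
    (h : HasDerivAt (fun t : ℝ => G (x + t • u)) G' 0) :
    iteratedFDeriv ℝ (n + 1) f x (Matrix.vecCons u m) = G' := by
  have hd : DifferentiableAt ℝ (iteratedFDeriv ℝ n f) x :=
    (hf.differentiable_iteratedFDeriv (by exact_mod_cast hn)) x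
  rw [iteratedFDeriv_succ_apply_left]
  have h1 := hd.hasFDerivAt
  have h2 : HasFDerivAt (fun y => iteratedFDeriv ℝ n f y m)
      ((ContinuousMultilinearMap.apply ℝ (fun _ : Fin n => E) ℝ m).comp
        (fderiv ℝ (iteratedFDeriv ℝ n f) x)) x :=
    (ContinuousMultilinearMap.apply ℝ (fun _ : Fin n => E) ℝ m).hasFDerivAt.comp x h1
  have h3 := (h2.hasLineDerivAt u)
  simp only [hG] at h3
  have h4 := HasDerivAt.unique h3 h
  simpa [Matrix.vecCons] using h4

section
variable {S A : Type*} [Fintype A] [Nonempty A]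

/-- Mean of `c (s, ·)` under the softmax policy. -/
noncomputable def smE (s : S) (c θ : S × A → ℝ) : ℝ := ∑ b, softmax θ s b * c (s, b)

lemma sum_exp_pos (θ : S × A → ℝ) (s : S) : 0 < ∑ b, Real.exp (θ (s, b)) :=
  Finset.sum_pos (fun _ _ => Real.exp_pos _) Finset.univ_nonempty

lemma softmax_d (θ u : S × A → ℝ) (s : S) (a : A) :
    HasDerivAt (fun t : ℝ => softmax (θ + t • u) s a)
      (softmax θ s a * (u (s, a) - smE s u θ)) 0 := by
  have hb : ∀ b, HasDerivAt (fun t : ℝ => Real.exp ((θ + t • u) (s, b)))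
      (Real.exp (θ (s, b)) * u (s, b)) 0 := by
    intro b
    have : HasDerivAt (fun t : ℝ => θ (s, b) + t * u (s, b)) (u (s, b)) 0 := by
      simpa using ((hasDerivAt_id (0 : ℝ)).mul_const (u (s, b))).const_add (θ (s, b))
    simpa using this.exp
  have hs := HasDerivAt.fun_sum (u := Finset.univ) (fun b _ => hb b)
  have hp := sum_exp_pos θ s
  have h := (hb a).div hs (by simpa using hp.ne')
  refine h.congr_deriv ?_
  have e : smE s u θ = (∑ b, Real.exp (θ (s, b)) * u (s, b)) / ∑ b, Real.exp (θ (s, b)) := by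
    simp only [smE, softmax, Finset.sum_div]
    exact Finset.sum_congr rfl fun b _ => by ring
  rw [e]
  simp only [softmax, zero_smul, add_zero]
  field_simp

lemma smE_d (θ u c : S × A → ℝ) (s : S) :
    HasDerivAt (fun t : ℝ => smE s c (θ + t • u))
      (smE s (c * u) θ - smE s c θ * smE s u θ) 0 := by
  have hs := HasDerivAt.fun_sum (u := Finset.univ)
    (fun b _ => (softmax_d θ u s b).mul_const (c (s, b)))
  refine hs.congr_deriv ?_
  have : smE s c θ * smE s u θ = ∑ b, softmax θ s b * c (s, b) * smE s u θ := by
    rw [← Finset.sum_mul]; rfl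
  rw [this, show smE s (c * u) θ = ∑ b, softmax θ s b * (c * u) (s, b) from rfl,
    ← Finset.sum_sub_distrib]
  exact Finset.sum_congr rfl fun b _ => by simp only [Pi.mul_apply]; ring

lemma softmax_pos (θ : S × A → ℝ) (s : S) (a : A) : 0 < softmax θ s a :=
  div_pos (Real.exp_pos _) (sum_exp_pos θ s)

lemma softmax_sum (θ : S × A → ℝ) (s : S) : ∑ b, softmax θ s b = 1 := by
  simp only [softmax]
  rw [← Finset.sum_div, div_self (sum_exp_pos θ s).ne']

lemma smE_le (θ c : S × A → ℝ) (s : S) (K : ℝ) (h : ∀ b, |c (s, b)| ≤ K) :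
    |smE s c θ| ≤ K := by
  calc |smE s c θ| ≤ ∑ b, |softmax θ s b * c (s, b)| := Finset.abs_sum_le_sum_abs _ _
    _ ≤ ∑ b, softmax θ s b * K := by
        refine Finset.sum_le_sum fun b _ => ?_
        rw [abs_mul, abs_of_pos (softmax_pos θ s b)]
        exact mul_le_mul_of_nonneg_left (h b) (softmax_pos θ s b).le
    _ = K := by rw [← Finset.sum_mul, softmax_sum, one_mul]

lemma softmax_contDiff [Fintype S] (s : S) (a : A) :
    ContDiff ℝ 3 (fun θ : S × A → ℝ => softmax θ s a) := by
  unfold softmax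
  refine ContDiff.div ?_ ?_ (fun θ => (sum_exp_pos θ s).ne')
  · fun_prop
  · fun_prop

lemma softmax_it1 [Fintype S] (θ w : S × A → ℝ) (s : S) (a : A) :
    iteratedFDeriv ℝ 1 (fun θ' => softmax θ' s a) θ ![w] =
      softmax θ s a * (w (s, a) - smE s w θ) :=
  step_aux (softmax_contDiff s a) (n := 0) (by norm_num) ![] (fun y => softmax y s a)
    (fun y => by simp) θ w _ (softmax_d θ w s a)

lemma softmax_it2 [Fintype S] (θ v w : S × A → ℝ) (s : S) (a : A) :
    iteratedFDeriv ℝ 2 (fun θ' => softmax θ' s a) θ ![v, w] =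
      softmax θ s a * ((v (s, a) - smE s v θ) * (w (s, a) - smE s w θ)
        - (smE s (w * v) θ - smE s w θ * smE s v θ)) := by
  refine step_aux (softmax_contDiff s a) (n := 1) (by norm_num) ![w] _
    (fun y => softmax_it1 y w s a) θ v _ ?_
  refine ((softmax_d θ v s a).mul ((smE_d θ v w s).const_sub (w (s, a)))).congr_deriv ?_
  simp only [zero_smul, add_zero]
  ring

lemma softmax_it3 [Fintype S] (θ u v w : S × A → ℝ) (s : S) (a : A) :
    iteratedFDeriv ℝ 3 (fun θ' => softmax θ' s a) θ ![u, v, w] =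
      softmax θ s a * ((u (s, a) - smE s u θ) *
        ((v (s, a) - smE s v θ) * (w (s, a) - smE s w θ)
          - (smE s (w * v) θ - smE s w θ * smE s v θ))
        - (smE s (v * u) θ - smE s v θ * smE s u θ) * (w (s, a) - smE s w θ)
        - (v (s, a) - smE s v θ) * (smE s (w * u) θ - smE s w θ * smE s u θ)
        - ((smE s (w * v * u) θ - smE s (w * v) θ * smE s u θ)
          - (smE s (w * u) θ - smE s w θ * smE s u θ) * smE s v θ
          - smE s w θ * (smE s (v * u) θ - smE s v θ * smE s u θ))) := by
  refine step_aux (softmax_contDiff s a) (n := 2) (by norm_num) ![v, w] _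
    (fun y => softmax_it2 y v w s a) θ u _ ?_
  refine ((softmax_d θ u s a).mul
    ((((smE_d θ u v s).const_sub (v (s, a))).mul ((smE_d θ u w s).const_sub (w (s, a)))).sub
      ((smE_d θ u (w * v) s).sub ((smE_d θ u w s).mul (smE_d θ u v s))))).congr_deriv ?_
  simp only [zero_smul, add_zero, Pi.mul_apply, Pi.sub_apply]
  ring
end

lemma abs_mul_le' {x y X Y : ℝ} (hx : |x| ≤ X) (hy : |y| ≤ Y) : |x * y| ≤ X * Y := by
  rw [abs_mul]
  exact mul_le_mul hx hy (abs_nonneg _) ((abs_nonneg _).trans hx)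

lemma abs_sub_le' {x y X Y : ℝ} (hx : |x| ≤ X) (hy : |y| ≤ Y) : |x - y| ≤ X + Y :=
  (abs_sub x y).trans (add_le_add hx hy)

/-- Bound for the third directional derivative of the softmax policy.
The sup norm `‖u‖_∞` is the norm of the Pi type `S × A → ℝ`. -/
theorem stmt5 {S A : Type*} [Fintype S] [Fintype A] [Nonempty S] [Nonempty A]
    (θ u v w : S × A → ℝ) (s : S) (a : A) :
    |iteratedFDeriv ℝ 3 (fun θ' => softmax θ' s a) θ ![u, v, w]| ≤
      48 * softmax θ s a * ‖u‖ * ‖v‖ * ‖w‖ := by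
  rw [softmax_it3, abs_mul, abs_of_pos (softmax_pos θ s a)]
  have hc : ∀ (c : S × A → ℝ) b, |c (s, b)| ≤ ‖c‖ := fun c b => norm_le_pi_norm c (s, b)
  have hE : ∀ c : S × A → ℝ, |smE s c θ| ≤ ‖c‖ := fun c => smE_le θ c s _ (hc c)
  have hE2 : ∀ c d : S × A → ℝ, |smE s (c * d) θ| ≤ ‖c‖ * ‖d‖ := fun c d =>
    smE_le θ _ s _ fun b => abs_mul_le' (hc c b) (hc d b)
  have hE3 : |smE s (w * v * u) θ| ≤ ‖w‖ * ‖v‖ * ‖u‖ :=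
    smE_le θ _ s _ fun b => abs_mul_le' (abs_mul_le' (hc w b) (hc v b)) (hc u b)
  have hD : ∀ c : S × A → ℝ, |c (s, a) - smE s c θ| ≤ ‖c‖ + ‖c‖ := fun c =>
    abs_sub_le' (hc c a) (hE c)
  have hC : ∀ c d : S × A → ℝ, |smE s (c * d) θ - smE s c θ * smE s d θ|
      ≤ ‖c‖ * ‖d‖ + ‖c‖ * ‖d‖ := fun c d =>
    abs_sub_le' (hE2 c d) (abs_mul_le' (hE c) (hE d))
  have key := abs_sub_le' (abs_sub_le' (abs_sub_le'
      (abs_mul_le' (hD u) (abs_sub_le' (abs_mul_le' (hD v) (hD w)) (hC w v)))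
      (abs_mul_le' (hC v u) (hD w))) (abs_mul_le' (hD v) (hC w u)))
    (abs_sub_le' (abs_sub_le' (abs_sub_le' hE3 (abs_mul_le' (hE2 w v) (hE u)))
      (abs_mul_le' (hC w u) (hE v))) (abs_mul_le' (hE w) (hC v u)))
  have hp : 0 ≤ ‖u‖ * ‖v‖ * ‖w‖ := by positivity
  calc _ ≤ softmax θ s a * (48 * (‖u‖ * ‖v‖ * ‖w‖)) := by
        refine mul_le_mul_of_nonneg_left (key.trans ?_) (softmax_pos θ s a).le
        nlinarith
    _ = _ := by ring
end

section
/- Let S and A be nonempty finite sets, γ ∈ [0,1), ρ a probability distribution on S, π a stationary policy (π(a|s) ≥ 0 and Σ_{a∈A} π(a|s) = 1 for each s), and let P and P' be two transition kernels on S×A such that Σ_{s'∈S} |P(s'|s,a) − P'(s'|s,a)| ≤ ε for every (s,a). Suppose d, d' : S → [0,∞) are probability vectors (Σ_s d(s) = Σ_s d'(s) = 1) satisfying the flow-conservation equations d(s) = (1−γ)·ρ(s) + γ·Σ_{(s',a')} P(s|s',a')·π(a'|s')·d(s') and d'(s) = (1−γ)·ρ(s) + γ·Σ_{(s',a')} P'(s|s',a')·π(a'|s')·d'(s')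 for all s ∈ S. Then Σ_{s∈S} |d(s) − d'(s)| ≤ γ·ε/(1−γ). -/
open scoped BigOperators

/-- Closeness of the discounted state-occupancy measures of a common
stationary policy under two transition kernels that are `ε`-close in `ℓ¹` distance,
via the flow-conservation characterization. -/
theorem stmt8 {S A : Type*} [Fintype S] [Fintype A] [Nonempty S] [Nonempty A]
    (γ ε : ℝ) (hγ0 : 0 ≤ γ) (hγ1 : γ < 1)
    (ρ : S → ℝ) (hρ0 : ∀ s, 0 ≤ ρ s) (hρ1 : ∑ s, ρ s = 1)
    (π : S → A → ℝ) (hπ0 : ∀ s a, 0 ≤ π s a) (hπ1 : ∀ s, ∑ a, π s a = 1)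
    (P P' : S → A → S → ℝ)
    (hP : ∀ s a, (∀ s', 0 ≤ P s a s') ∧ ∑ s', P s a s' = 1)
    (hP' : ∀ s a, (∀ s', 0 ≤ P' s a s') ∧ ∑ s', P' s a s' = 1)
    (hclose : ∀ s a, ∑ s', |P s a s' - P' s a s'| ≤ ε)
    (d d' : S → ℝ)
    (hd0 : ∀ s, 0 ≤ d s) (hd1 : ∑ s, d s = 1)
    (hd'0 : ∀ s, 0 ≤ d' s) (hd'1 : ∑ s, d' s = 1)
    (hflow : ∀ s, d s =
      (1 - γ) * ρ s + γ * ∑ s' : S, ∑ a' : A, P s' a' s * π s' a' * d s')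
    (hflow' : ∀ s, d' s =
      (1 - γ) * ρ s + γ * ∑ s' : S, ∑ a' : A, P' s' a' s * π s' a' * d' s') :
    ∑ s, |d s - d' s| ≤ γ * ε / (1 - γ) := by
  have key : ∀ s, |d s - d' s| ≤ γ * ∑ s' : S, ∑ a' : A,
      (P s' a' s * (π s' a' * |d s' - d' s'|) + |P s' a' s - P' s' a' s| * (π s' a' * d' s')) := by
    intro s
    have h : d s - d' s = γ * ∑ s' : S, ∑ a' : A,
        (P s' a' s * (π s' a' * (d s' - d' s'))
          + (P s' a' s - P' s' a' s) * (π s' a' * d' s')) := by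
      rw [hflow s, hflow' s, add_sub_add_left_eq_sub, ← mul_sub, ← Finset.sum_sub_distrib]
      congr 1
      refine Finset.sum_congr rfl fun s' _ => ?_
      rw [← Finset.sum_sub_distrib]
      refine Finset.sum_congr rfl fun a' _ => ?_
      ring
    rw [h, abs_mul, abs_of_nonneg hγ0]
    refine mul_le_mul_of_nonneg_left ?_ hγ0
    refine (Finset.abs_sum_le_sum_abs _ _).trans (Finset.sum_le_sum fun s' _ => ?_)
    refine (Finset.abs_sum_le_sum_abs _ _).trans (Finset.sum_le_sum fun a' _ => ?_)
    refine (abs_add_le _ _).trans (le_of_eq ?_)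
    rw [abs_mul, abs_mul, abs_mul, abs_mul, abs_of_nonneg ((hP s' a').1 s),
      abs_of_nonneg (hπ0 s' a'), abs_of_nonneg (hd'0 s')]
  have main : ∑ s, |d s - d' s| ≤ γ * (∑ s, |d s - d' s| + ε) := by
    refine (Finset.sum_le_sum fun s _ => key s).trans ?_
    rw [← Finset.mul_sum]
    refine mul_le_mul_of_nonneg_left ?_ hγ0
    rw [Finset.sum_comm]
    have h2 : ∀ s', ∑ s : S, ∑ a' : A,
        (P s' a' s * (π s' a' * |d s' - d' s'|) + |P s' a' s - P' s' a' s| * (π s' a' * d' s'))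
        ≤ |d s' - d' s'| + ε * d' s' := by
      intro s'
      rw [Finset.sum_comm]
      have h3 : ∑ a' : A, π s' a' * (|d s' - d' s'| + ε * d' s')
          = |d s' - d' s'| + ε * d' s' := by
        rw [← Finset.sum_mul, hπ1, one_mul]
      rw [← h3]
      refine Finset.sum_le_sum fun a' _ => ?_
      rw [Finset.sum_add_distrib, ← Finset.sum_mul, ← Finset.sum_mul, (hP s' a').2]
      have h4 := mul_le_mul_of_nonneg_right (hclose s' a') (mul_nonneg (hπ0 s' a') (hd'0 s'))
      linarith
    refine (Finset.sum_le_sum fun s' _ => h2 s').trans (le_of_eq ?_)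
    rw [Finset.sum_add_distrib, ← Finset.mul_sum, hd'1, mul_one]
  rw [le_div_iff₀ (by linarith)]
  linarith
end

section
/- Let S and A be nonempty finite sets, γ ∈ [0,1), c ≥ 0, r : S×A → ℝ, π a stationary policy (π(a|s) ≥ 0 and Σ_{a∈A} π(a|s) = 1 for each s), and let P and P' be two transition kernels on S×A such that Σ_{s'∈S} |P(s'|s,a) − P'(s'|s,a)| ≤ ε for every (s,a). Suppose V, V' : S → ℝ satisfy ‖V‖_∞ ≤ c, ‖V'‖_∞ ≤ c, and the Bellman equations V(s) = Σ_{a∈A} π(a|s)·( r(s,a) + γ·Σ_{s'∈S} P(s'|s,a)·V(s') ) and V'(s) = Σ_{a∈A} π(a|s)·( r(s,a) + γ·Σ_{s'∈S} P'(s'|s,a)·V'(s') ) for all s ∈ S. Then max_{s∈S} |V(s) − V'(s)| ≤ ε·c/(1−γ). -/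
open scoped BigOperators

/-- Closeness of the value functions of a common stationary policy under
two transition kernels that are `ε`-close in `ℓ¹` distance, via the Bellman equations. -/
theorem stmt9 {S A : Type*} [Fintype S] [Fintype A] [Nonempty S] [Nonempty A]
    (γ ε c : ℝ) (hγ0 : 0 ≤ γ) (hγ1 : γ < 1) (hc : 0 ≤ c)
    (r : S → A → ℝ)
    (π : S → A → ℝ) (hπ0 : ∀ s a, 0 ≤ π s a) (hπ1 : ∀ s, ∑ a, π s a = 1)
    (P P' : S → A → S → ℝ)
    (hP : ∀ s a, (∀ s', 0 ≤ P s a s') ∧ ∑ s', P s a s' = 1)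
    (hP' : ∀ s a, (∀ s', 0 ≤ P' s a s') ∧ ∑ s', P' s a s' = 1)
    (hclose : ∀ s a, ∑ s', |P s a s' - P' s a s'| ≤ ε)
    (V V' : S → ℝ)
    (hVb : ∀ s, |V s| ≤ c) (hV'b : ∀ s, |V' s| ≤ c)
    (hBell : ∀ s, V s = ∑ a, π s a * (r s a + γ * ∑ s', P s a s' * V s'))
    (hBell' : ∀ s, V' s = ∑ a, π s a * (r s a + γ * ∑ s', P' s a s' * V' s')) :
    ∀ s, |V s - V' s| ≤ ε * c / (1 - γ) := by
  obtain ⟨m, hm⟩ := Finite.exists_max (fun s => |V s - V' s|)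
  have hε : 0 ≤ ε := by
    obtain ⟨a⟩ := ‹Nonempty A›
    exact le_trans (Finset.sum_nonneg fun _ _ => abs_nonneg _) (hclose m a)
  have key : ∀ a, |∑ s', P m a s' * V s' - ∑ s', P' m a s' * V' s'|
      ≤ |V m - V' m| + ε * c := by
    intro a
    have e : ∑ s', P m a s' * V s' - ∑ s', P' m a s' * V' s'
        = ∑ s', P m a s' * (V s' - V' s') + ∑ s', (P m a s' - P' m a s') * V' s' := by
      rw [← Finset.sum_sub_distrib, ← Finset.sum_add_distrib]
      exact Finset.sum_congr rfl fun _ _ => by ring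
    rw [e]
    refine (abs_add_le _ _).trans (add_le_add ?_ ?_)
    · calc |∑ s', P m a s' * (V s' - V' s')| ≤ ∑ s', |P m a s' * (V s' - V' s')| :=
            Finset.abs_sum_le_sum_abs _ _
        _ ≤ ∑ s', P m a s' * |V m - V' m| := by
            refine Finset.sum_le_sum fun s' _ => ?_
            rw [abs_mul, abs_of_nonneg ((hP m a).1 s')]
            exact mul_le_mul_of_nonneg_left (hm s') ((hP m a).1 s')
        _ = |V m - V' m| := by rw [← Finset.sum_mul, (hP m a).2, one_mul]
    · calc |∑ s', (P m a s' - P' m a s') * V' s'|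
            ≤ ∑ s', |(P m a s' - P' m a s') * V' s'| := Finset.abs_sum_le_sum_abs _ _
        _ ≤ ∑ s', |P m a s' - P' m a s'| * c := by
            refine Finset.sum_le_sum fun s' _ => ?_
            rw [abs_mul]
            exact mul_le_mul_of_nonneg_left (hV'b s') (abs_nonneg _)
        _ ≤ ε * c := by
            rw [← Finset.sum_mul]
            exact mul_le_mul_of_nonneg_right (hclose m a) hc
  have main : |V m - V' m| ≤ γ * (|V m - V' m| + ε * c) := by
    have e : V m - V' m = ∑ a, π m a *
        (γ * (∑ s', P m a s' * V s' - ∑ s', P' m a s' * V' s')) := by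
      rw [hBell m, hBell' m, ← Finset.sum_sub_distrib]
      exact Finset.sum_congr rfl fun _ _ => by ring
    calc |V m - V' m| = |∑ a, π m a *
        (γ * (∑ s', P m a s' * V s' - ∑ s', P' m a s' * V' s'))| := congrArg _ e
      _ ≤ ∑ a, |π m a * (γ * (∑ s', P m a s' * V s' - ∑ s', P' m a s' * V' s'))| :=
          Finset.abs_sum_le_sum_abs _ _
      _ ≤ ∑ a, π m a * (γ * (|V m - V' m| + ε * c)) := by
          refine Finset.sum_le_sum fun a _ => ?_
          rw [abs_mul, abs_mul, abs_of_nonneg (hπ0 m a), abs_of_nonneg hγ0]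
          exact mul_le_mul_of_nonneg_left
            (mul_le_mul_of_nonneg_left (key a) hγ0) (hπ0 m a)
      _ = γ * (|V m - V' m| + ε * c) := by rw [← Finset.sum_mul, hπ1, one_mul]
  intro s
  refine (hm s).trans ?_
  rw [le_div_iff₀ (by linarith)]
  nlinarith [mul_nonneg hε hc]
end

section
/- Let S and A be nonempty finite sets, T ≥ 1, γ ∈ [0,1), λ ≥ 0, P a transition kernel on S×A, ρ a probability distribution on S, and r : S×A → [0,1]. For θ ∈ ℝ^{S×A}, let Ḡ(θ) = Σ_{z∈(S×A)^T} ν(θ;z)·u_θ(z) be the expectation of the entropy-regularized single-trajectory REINFORCE vector under the truncated-trajectory distribution. Then Ḡ is Lipschitz continuous: for all θ, θ' ∈ ℝ^{S×A}, ‖Ḡ(θ) − Ḡ(θ')‖₂ ≤ ( (8 + λ·(4 + 8·log|A|)) / (1−γ)³ )·‖θ − θ'‖₂. -/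
open scoped BigOperators

/-- The score vector `∇ log π_θ(a|s) ∈ ℝ^{S×A}`. -/
noncomputable def score {S A : Type*} [Fintype A] [DecidableEq S] [DecidableEq A]
    (θ : S × A → ℝ) (s : S) (a : A) : S × A → ℝ :=
  fun p => if p.1 = s then (if p.2 = a then (1 : ℝ) else 0) - softmax θ p.1 p.2 else 0

/-- The truncated-trajectory distribution
`ν(θ; z) = ρ(s⁰) π_θ(a⁰|s⁰) ∏_{t=1}^{T-1} P(s^t|s^{t-1},a^{t-1}) π_θ(a^t|s^t)`. -/
noncomputable def trajDist {S A : Type*} [Fintype A] {T : ℕ}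
    (P : S → A → S → ℝ) (ρ : S → ℝ) (θ : S × A → ℝ) (z : Fin T → S × A) : ℝ :=
  ∏ t : Fin T,
    (if (t : ℕ) = 0 then ρ (z t).1
      else
        P (z ⟨(t : ℕ) - 1, lt_of_le_of_lt (Nat.sub_le _ _) t.isLt⟩).1
          (z ⟨(t : ℕ) - 1, lt_of_le_of_lt (Nat.sub_le _ _) t.isLt⟩).2 (z t).1) *
      softmax θ (z t).1 (z t).2

/-- The single-trajectory (entropy-regularized) REINFORCE vector
`u_θ(z) = Σ_{t<T} γ^t (Σ_{ℓ≤t} ∇log π_θ(a^ℓ|s^ℓ)) (r(s^t,a^t) - λ log π_θ(a^t|s^t))`. -/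
noncomputable def reinforce {S A : Type*} [Fintype S] [Fintype A] [DecidableEq S]
    [DecidableEq A] {T : ℕ} (γ lam : ℝ) (r : S → A → ℝ) (θ : S × A → ℝ)
    (z : Fin T → S × A) : S × A → ℝ :=
  ∑ t : Fin T,
    (γ ^ (t : ℕ) * (r (z t).1 (z t).2 - lam * Real.log (softmax θ (z t).1 (z t).2))) •
      ∑ l : Fin T, if (l : ℕ) ≤ (t : ℕ) then score θ (z l).1 (z l).2 else 0

/-- The batch REINFORCE estimator `ĝ_θ(z) = (1/B) Σ_b u_θ(z_b)`. -/
noncomputable def batchEstimator {S A : Type*} [Fintype S] [Fintype A] [DecidableEq S]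
    [DecidableEq A] {T B : ℕ} (γ lam : ℝ) (r : S → A → ℝ) (θ : S × A → ℝ)
    (z : Fin B → Fin T → S × A) : S × A → ℝ :=
  (1 / (B : ℝ)) • ∑ b, reinforce γ lam r θ (z b)

/-- The Euclidean norm on `ι → ℝ`. -/
noncomputable def eucNorm {ι : Type*} [Fintype ι] (u : ι → ℝ) : ℝ :=
  Real.sqrt (∑ i, u i ^ 2)

namespace Stmt12

lemma softmax_pos {S A : Type*} [Fintype A] [Nonempty A] (θ : S × A → ℝ) (s : S) (a : A) :
    0 < softmax θ s a :=
  div_pos (Real.exp_pos _) (Finset.sum_pos (fun _ _ => Real.exp_pos _) Finset.univ_nonempty)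

lemma softmax_sum {S A : Type*} [Fintype A] [Nonempty A] (θ : S × A → ℝ) (s : S) :
    ∑ a, softmax θ s a = 1 := by
  unfold softmax
  rw [← Finset.sum_div]
  exact div_self (Finset.sum_pos (fun _ _ => Real.exp_pos _) Finset.univ_nonempty).ne'

lemma softmax_le_one {S A : Type*} [Fintype A] [Nonempty A] (θ : S × A → ℝ) (s : S) (a : A) :
    softmax θ s a ≤ 1 := by
  rw [← softmax_sum θ s]
  exact Finset.single_le_sum (f := fun a => softmax θ s a)
    (fun b _ => (softmax_pos θ s b).le) (Finset.mem_univ a)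

/-- inner product of the score with a vector -/
noncomputable def q {S A : Type*} [Fintype A] (θ w : S × A → ℝ) (y : S × A) : ℝ :=
  w y - ∑ b, softmax θ y.1 b * w (y.1, b)

lemma score_inner {S A : Type*} [Fintype S] [Fintype A] [DecidableEq S] [DecidableEq A]
    (θ w : S × A → ℝ) (s : S) (a : A) : ∑ i, w i * score θ s a i = q θ w (s, a) := by
  unfold score q
  rw [Fintype.sum_prod_type, Finset.sum_eq_single s]
  · simp only [if_true, mul_sub, Finset.sum_sub_distrib, mul_comm (softmax _ _ _)]
    simp
  · intro b _ hb
    simp [hb]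
  · simp

lemma eucNorm_nonneg {ι : Type*} [Fintype ι] (u : ι → ℝ) : 0 ≤ eucNorm u := Real.sqrt_nonneg _

lemma eucNorm_sq {ι : Type*} [Fintype ι] (u : ι → ℝ) : eucNorm u ^ 2 = ∑ i, u i ^ 2 :=
  Real.sq_sqrt (Finset.sum_nonneg fun _ _ => sq_nonneg _)

lemma abs_le_eucNorm {ι : Type*} [Fintype ι] (u : ι → ℝ) (i : ι) : |u i| ≤ eucNorm u := by
  apply Real.abs_le_sqrt
  exact Finset.single_le_sum (f := fun i => u i ^ 2) (fun _ _ => sq_nonneg _) (Finset.mem_univ i)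

lemma q_sq_le {S A : Type*} [Fintype S] [Fintype A] [Nonempty A]
    (θ w : S × A → ℝ) (y : S × A) : q θ w y ^ 2 ≤ 2 * eucNorm w ^ 2 := by
  classical
  obtain ⟨s, a⟩ := y
  have h1 : q θ w (s, a) = ∑ b, ((if b = a then (1:ℝ) else 0) - softmax θ s b) * w (s, b) := by
    simp [q, sub_mul, Finset.sum_sub_distrib]
  have h2 : ∑ b, ((if b = a then (1:ℝ) else 0) - softmax θ s b) ^ 2 ≤ 2 := by
    have : ∀ b ∈ Finset.univ, ((if b = a then (1:ℝ) else 0) - softmax θ s b) ^ 2 ≤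
        (if b = a then (1:ℝ) else 0) + softmax θ s b := by
      intro b _
      have := softmax_pos θ s b
      have := softmax_le_one θ s b
      split_ifs <;> nlinarith
    refine (Finset.sum_le_sum this).trans ?_
    rw [Finset.sum_add_distrib, softmax_sum]
    simp
    norm_num
  have h3 : ∑ b, w (s, b) ^ 2 ≤ eucNorm w ^ 2 := by
    rw [eucNorm_sq, Fintype.sum_prod_type]
    exact Finset.single_le_sum (f := fun s => ∑ b, w (s, b) ^ 2)
      (fun _ _ => Finset.sum_nonneg fun _ _ => sq_nonneg _) (Finset.mem_univ s)
  rw [h1]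
  refine (Finset.sum_mul_sq_le_sq_mul_sq _ _ _).trans ?_
  exact mul_le_mul h2 h3 (Finset.sum_nonneg fun _ _ => sq_nonneg _) (by norm_num)

lemma abs_q_le {S A : Type*} [Fintype S] [Fintype A] [Nonempty A]
    (θ w : S × A → ℝ) (y : S × A) : |q θ w y| ≤ √2 * eucNorm w := by
  apply abs_le_of_sq_le_sq
  · rw [mul_pow, Real.sq_sqrt (by norm_num)]
    exact q_sq_le θ w y
  · exact mul_nonneg (Real.sqrt_nonneg _) (eucNorm_nonneg _)

/-- minus derivative of `q` -/
noncomputable def hh {S A : Type*} [Fintype A] (θ v w : S × A → ℝ) (y : S × A) : ℝ :=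
  ∑ b, softmax θ y.1 b * q θ v (y.1, b) * w (y.1, b)

lemma abs_hh_le {S A : Type*} [Fintype S] [Fintype A] [Nonempty A]
    (θ v w : S × A → ℝ) (y : S × A) : |hh θ v w y| ≤ 2 * (eucNorm v * eucNorm w) := by
  have hs : √2 ≤ 2 := by rw [Real.sqrt_le_left (by norm_num)]; norm_num
  have hv := eucNorm_nonneg v
  have hw := eucNorm_nonneg w
  calc |hh θ v w y| ≤ ∑ b, |softmax θ y.1 b * q θ v (y.1, b) * w (y.1, b)| :=
        Finset.abs_sum_le_sum_abs _ _
    _ ≤ ∑ b, softmax θ y.1 b * (2 * (eucNorm v * eucNorm w)) := by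
        apply Finset.sum_le_sum
        intro b _
        rw [abs_mul, abs_mul, abs_of_pos (softmax_pos θ y.1 b), mul_assoc]
        apply mul_le_mul_of_nonneg_left _ (softmax_pos θ y.1 b).le
        calc _ ≤ (2 * eucNorm v) * eucNorm w :=
              mul_le_mul ((abs_q_le θ v _).trans (by gcongr)) (abs_le_eucNorm w _)
                (abs_nonneg _) (by positivity)
          _ = _ := by ring
    _ = _ := by rw [← Finset.sum_mul, softmax_sum, one_mul]

lemma hasDeriv_softmax {S A : Type*} [Fintype A] [Nonempty A] (θ v : S × A → ℝ) (s : S) (a : A)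
    (x : ℝ) : HasDerivAt (fun x : ℝ => softmax (θ + x • v) s a)
      (softmax (θ + x • v) s a * q (θ + x • v) v (s, a)) x := by
  have he : ∀ b, HasDerivAt (fun x : ℝ => Real.exp ((θ + x • v) (s, b)))
      (Real.exp ((θ + x • v) (s, b)) * v (s, b)) x := by
    intro b
    apply HasDerivAt.exp
    simpa using ((hasDerivAt_id x).mul_const (v (s, b))).const_add (θ (s, b))
  have hpos : 0 < ∑ b, Real.exp ((θ + x • v) (s, b)) :=
    Finset.sum_pos (fun _ _ => Real.exp_pos _) Finset.univ_nonempty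
  have hd : HasDerivAt (fun x : ℝ => ∑ b, Real.exp ((θ + x • v) (s, b)))
      (∑ b, Real.exp ((θ + x • v) (s, b)) * v (s, b)) x :=
    HasDerivAt.fun_sum fun b _ => he b
  have := (he a).fun_div hd hpos.ne'
  refine this.congr_deriv ?_
  have e : ∑ b, softmax (θ + x • v) s b * v (s, b) =
      (∑ b, Real.exp ((θ + x • v) (s, b)) * v (s, b)) / ∑ b, Real.exp ((θ + x • v) (s, b)) := by
    rw [Finset.sum_div]
    exact Finset.sum_congr rfl fun b _ => by unfold softmax; ring
  unfold q
  simp only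
  rw [e]
  unfold softmax
  field_simp

lemma hasDeriv_log {S A : Type*} [Fintype A] [Nonempty A] (θ v : S × A → ℝ) (s : S) (a : A)
    (x : ℝ) : HasDerivAt (fun x : ℝ => Real.log (softmax (θ + x • v) s a))
      (q (θ + x • v) v (s, a)) x := by
  have hp := softmax_pos (θ + x • v) s a
  refine ((hasDeriv_softmax θ v s a x).log hp.ne').congr_deriv ?_
  field_simp

lemma hasDeriv_q {S A : Type*} [Fintype A] [Nonempty A] (θ v w : S × A → ℝ) (y : S × A)
    (x : ℝ) : HasDerivAt (fun x : ℝ => q (θ + x • v) w y) (- hh (θ + x • v) v w y) x := by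
  unfold q hh
  refine HasDerivAt.const_sub _ ?_
  exact HasDerivAt.fun_sum fun b _ => (hasDeriv_softmax θ v y.1 b x).mul_const _

/-- the one-step kernel -/
noncomputable def ker {S A : Type*} (P : S → A → S → ℝ) (ρ : S → ℝ) {n : ℕ}
    (z : Fin n → S × A) (s : S) : ℝ :=
  if h : n = 0 then ρ s else
    P (z ⟨n - 1, Nat.sub_lt (Nat.pos_of_ne_zero h) one_pos⟩).1
      (z ⟨n - 1, Nat.sub_lt (Nat.pos_of_ne_zero h) one_pos⟩).2 s

lemma trajDist_snoc {S A : Type*} [Fintype A] (P : S → A → S → ℝ) (ρ : S → ℝ) (θ : S × A → ℝ)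
    {n : ℕ} (z : Fin n → S × A) (y : S × A) :
    trajDist P ρ θ (Fin.snoc (α := fun _ => S × A) z y) =
      trajDist P ρ θ z * (ker P ρ z y.1 * softmax θ y.1 y.2) := by
  unfold trajDist
  rw [Fin.prod_univ_castSucc]
  congr 1
  · apply Finset.prod_congr rfl
    intro t _
    have e : (⟨(t.castSucc : ℕ) - 1, lt_of_le_of_lt (Nat.sub_le _ _) t.castSucc.isLt⟩ : Fin (n+1))
      = Fin.castSucc ⟨(t : ℕ) - 1, lt_of_le_of_lt (Nat.sub_le _ _) t.isLt⟩ := rfl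
    rw [e]
    simp only [Fin.snoc_castSucc, Fin.val_castSucc]
  · unfold ker
    simp only [Fin.snoc_last, Fin.val_last]
    split_ifs with h
    · rfl
    · have e : (⟨n - 1, lt_of_le_of_lt (Nat.sub_le _ _) (Fin.last n).isLt⟩ : Fin (n+1))
        = Fin.castSucc ⟨n - 1, Nat.sub_lt (Nat.pos_of_ne_zero h) one_pos⟩ := rfl
      simp only [e, Fin.snoc_castSucc]

lemma sum_snoc {X : Type*} [Fintype X] {n : ℕ} (f : (Fin (n+1) → X) → ℝ) :
    ∑ z, f z = ∑ z : Fin n → X, ∑ y, f (Fin.snoc (α := fun _ => X) z y) := by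
  rw [← (Fin.snocEquiv (fun _ : Fin (n+1) => X)).sum_comp f, Fintype.sum_prod_type,
    Finset.sum_comm]
  rfl

lemma ker_nonneg {S A : Type*} [Fintype S]
    (P : S → A → S → ℝ) (hP : ∀ s a, (∀ s', 0 ≤ P s a s') ∧ ∑ s', P s a s' = 1)
    (ρ : S → ℝ) (hρ0 : ∀ s, 0 ≤ ρ s) {n : ℕ} (z : Fin n → S × A) (s : S) : 0 ≤ ker P ρ z s := by
  unfold ker
  split_ifs
  · exact hρ0 s
  · exact (hP _ _).1 s

lemma ker_sum {S A : Type*} [Fintype S]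
    (P : S → A → S → ℝ) (hP : ∀ s a, (∀ s', 0 ≤ P s a s') ∧ ∑ s', P s a s' = 1)
    (ρ : S → ℝ) (hρ1 : ∑ s, ρ s = 1) {n : ℕ} (z : Fin n → S × A) : ∑ s, ker P ρ z s = 1 := by
  unfold ker
  split_ifs
  · exact hρ1
  · exact (hP _ _).2

lemma trajDist_nonneg {S A : Type*} [Fintype S] [Fintype A] [Nonempty A]
    (P : S → A → S → ℝ) (hP : ∀ s a, (∀ s', 0 ≤ P s a s') ∧ ∑ s', P s a s' = 1)
    (ρ : S → ℝ) (hρ0 : ∀ s, 0 ≤ ρ s) (θ : S × A → ℝ) {n : ℕ} (z : Fin n → S × A) :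
    0 ≤ trajDist P ρ θ z := by
  unfold trajDist
  apply Finset.prod_nonneg
  intro t _
  apply mul_nonneg _ (softmax_pos _ _ _).le
  split_ifs
  · exact hρ0 _
  · exact (hP _ _).1 _

lemma sum_ker_softmax {S A : Type*} [Fintype S] [Fintype A] [Nonempty A]
    (P : S → A → S → ℝ) (hP : ∀ s a, (∀ s', 0 ≤ P s a s') ∧ ∑ s', P s a s' = 1)
    (ρ : S → ℝ) (hρ1 : ∑ s, ρ s = 1) (θ : S × A → ℝ) {n : ℕ} (z : Fin n → S × A) :
    ∑ y : S × A, ker P ρ z y.1 * softmax θ y.1 y.2 = 1 := by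
  rw [Fintype.sum_prod_type]
  simp only [← Finset.mul_sum, softmax_sum, mul_one]
  exact ker_sum P hP ρ hρ1 z

lemma trajDist_sum {S A : Type*} [Fintype S] [Fintype A] [Nonempty A]
    (P : S → A → S → ℝ) (hP : ∀ s a, (∀ s', 0 ≤ P s a s') ∧ ∑ s', P s a s' = 1)
    (ρ : S → ℝ) (hρ1 : ∑ s, ρ s = 1) (θ : S × A → ℝ) (n : ℕ) :
    ∑ z : Fin n → S × A, trajDist P ρ θ z = 1 := by
  induction n with
  | zero => simp [trajDist]
  | succ n ih =>
    rw [sum_snoc]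
    simp only [trajDist_snoc, ← Finset.mul_sum, sum_ker_softmax P hP ρ hρ1, mul_one]
    exact ih

lemma sum_last_le {S A : Type*} [Fintype S] [Fintype A] [Nonempty A]
    (P : S → A → S → ℝ) (hP : ∀ s a, (∀ s', 0 ≤ P s a s') ∧ ∑ s', P s a s' = 1)
    (ρ : S → ℝ) (hρ0 : ∀ s, 0 ≤ ρ s) (hρ1 : ∑ s, ρ s = 1) (θ : S × A → ℝ) (n : ℕ)
    (g : S × A → ℝ) (C : ℝ) (hg : ∀ s, ∑ a, softmax θ s a * g (s, a) ≤ C) :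
    ∑ z : Fin (n+1) → S × A, trajDist P ρ θ z * g (z (Fin.last n)) ≤ C := by
  rw [sum_snoc]
  simp only [trajDist_snoc, Fin.snoc_last]
  have h : ∀ z : Fin n → S × A, ∑ y : S × A,
      trajDist P ρ θ z * (ker P ρ z y.1 * softmax θ y.1 y.2) * g y ≤ trajDist P ρ θ z * C := by
    intro z
    simp only [mul_assoc, ← Finset.mul_sum]
    apply mul_le_mul_of_nonneg_left _ (trajDist_nonneg P hP ρ hρ0 θ z)
    rw [Fintype.sum_prod_type]
    simp only [← Finset.mul_sum]
    calc _ ≤ ∑ s, ker P ρ z s * C := Finset.sum_le_sum fun s _ =>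
          mul_le_mul_of_nonneg_left (hg s) (ker_nonneg P hP ρ hρ0 z s)
      _ = C := by rw [← Finset.sum_mul, ker_sum P hP ρ hρ1, one_mul]
  refine (Finset.sum_le_sum fun z _ => h z).trans ?_
  rw [← Finset.sum_mul, trajDist_sum P hP ρ hρ1, one_mul]

lemma entropy_le {S A : Type*} [Fintype A] [Nonempty A] (θ : S × A → ℝ) (s : S) :
    ∑ a, softmax θ s a * (- Real.log (softmax θ s a)) ≤ Real.log (Fintype.card A) := by
  have hc : (0:ℝ) < Fintype.card A := by exact_mod_cast Fintype.card_pos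
  have h : ∀ a ∈ Finset.univ, softmax θ s a * (- Real.log (softmax θ s a)) ≤
      softmax θ s a * Real.log (Fintype.card A) + ((Fintype.card A : ℝ)⁻¹ - softmax θ s a) := by
    intro a _
    have hp := softmax_pos θ s a
    have := Real.log_le_sub_one_of_pos (x := (Fintype.card A * softmax θ s a)⁻¹) (by positivity)
    rw [Real.log_inv, Real.log_mul hc.ne' hp.ne'] at this
    have h2 := mul_le_mul_of_nonneg_left this hp.le
    have e : softmax θ s a * ((Fintype.card A * softmax θ s a)⁻¹ - 1) =
      (Fintype.card A : ℝ)⁻¹ - softmax θ s a := by field_simp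
    rw [e] at h2
    linarith
  refine (Finset.sum_le_sum h).trans ?_
  rw [Finset.sum_add_distrib, Finset.sum_sub_distrib, ← Finset.sum_mul, softmax_sum]
  simp [hc.ne']

/-- regularized reward -/
noncomputable def cc {S A : Type*} [Fintype A] (lam : ℝ) (r : S → A → ℝ) (θ : S × A → ℝ)
    (y : S × A) : ℝ := r y.1 y.2 - lam * Real.log (softmax θ y.1 y.2)

/-- The contribution of time `n`, paired with `w`. -/
noncomputable def FF {S A : Type*} [Fintype S] [Fintype A] (lam : ℝ) (r : S → A → ℝ)
    (P : S → A → S → ℝ) (ρ : S → ℝ) (w : S × A → ℝ) (n : ℕ) (θ : S × A → ℝ) : ℝ :=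
  ∑ z : Fin (n+1) → S × A, trajDist P ρ θ z *
    (cc lam r θ (z (Fin.last n)) * ∑ l, q θ w (z l))

lemma inner_G {S A : Type*} [Fintype S] [Fintype A] [Nonempty A]
    [DecidableEq S] [DecidableEq A] (γ lam : ℝ)
    (P : S → A → S → ℝ) (hP : ∀ s a, (∀ s', 0 ≤ P s a s') ∧ ∑ s', P s a s' = 1)
    (ρ : S → ℝ) (hρ1 : ∑ s, ρ s = 1) (r : S → A → ℝ) (θ w : S × A → ℝ) (T : ℕ) :
    ∑ i, w i * (∑ z : Fin T → S × A, trajDist P ρ θ z • reinforce γ lam r θ z) i =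
      ∑ n ∈ Finset.range T, γ ^ n * FF lam r P ρ w n θ := by
  have h0 : ∀ T : ℕ, ∑ i, w i * (∑ z : Fin T → S × A,
      trajDist P ρ θ z • reinforce γ lam r θ z) i =
      ∑ z : Fin T → S × A, trajDist P ρ θ z * ∑ t : Fin T, γ ^ (t:ℕ) * (cc lam r θ (z t) *
        ∑ l : Fin T, if (l : ℕ) ≤ (t : ℕ) then q θ w (z l) else 0) := by
    intro T
    simp only [Finset.sum_apply, Pi.smul_apply, smul_eq_mul, Finset.mul_sum (Finset.univ : Finset (Fin T → S × A)) _ (w _)]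
    rw [Finset.sum_comm]
    apply Finset.sum_congr rfl
    intro z _
    have e1 : ∀ i, w i * (trajDist P ρ θ z * reinforce γ lam r θ z i) =
      trajDist P ρ θ z * (w i * reinforce γ lam r θ z i) := fun i => by ring
    simp only [e1]
    rw [← Finset.mul_sum]
    congr 1
    unfold reinforce
    simp only [Finset.sum_apply, Pi.smul_apply, smul_eq_mul, Finset.mul_sum]
    rw [Finset.sum_comm]
    apply Finset.sum_congr rfl
    intro t _
    rw [Finset.sum_comm]
    apply Finset.sum_congr rfl
    intro l _
    split_ifs
    · rw [show q θ w (z l) = q θ w ((z l).1, (z l).2) from rfl, ← score_inner, Finset.mul_sum,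
        Finset.mul_sum]
      apply Finset.sum_congr rfl
      intro i _
      unfold cc
      ring
    · simp
  rw [h0]
  induction T with
  | zero => simp
  | succ T ih =>
    rw [Finset.sum_range_succ, ← ih]
    simp only [Fin.sum_univ_castSucc (n := T), mul_add, Finset.sum_add_distrib]
    have hnot : ∀ t : Fin T, ¬ (T ≤ (t : ℕ)) := fun t => by have := t.isLt; omega
    have hle : ∀ t : Fin T, (t : ℕ) ≤ T := fun t => t.isLt.le
    congr 1
    · rw [sum_snoc]
      simp only [Fin.snoc_castSucc, trajDist_snoc, Fin.val_castSucc, Fin.val_last, hnot, if_false,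
        mul_zero, Finset.sum_const_zero, add_zero]
      apply Finset.sum_congr rfl
      intro z _
      rw [← Finset.sum_mul, ← Finset.mul_sum, sum_ker_softmax P hP ρ hρ1, mul_one]
    · unfold FF
      simp only [Fin.sum_univ_castSucc (n := T), Fin.val_castSucc, Fin.val_last, hle, if_true,
        le_refl]
      rw [Finset.mul_sum, ← Finset.sum_add_distrib]
      apply Finset.sum_congr rfl
      intro z _
      ring

lemma hasDeriv_trajDist {S A : Type*} [Fintype A] [Nonempty A] (P : S → A → S → ℝ) (ρ : S → ℝ)
    (θ v : S × A → ℝ) {n : ℕ} (z : Fin n → S × A) (x : ℝ) :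
    HasDerivAt (fun x : ℝ => trajDist P ρ (θ + x • v) z)
      (trajDist P ρ (θ + x • v) z * ∑ l, q (θ + x • v) v (z l)) x := by
  unfold trajDist
  refine (HasDerivAt.fun_finsetProd (fun t _ =>
    (hasDeriv_softmax θ v (z t).1 (z t).2 x).const_mul _)).congr_deriv ?_
  rw [Finset.mul_sum]
  apply Finset.sum_congr rfl
  intro t _
  rw [← Finset.prod_erase_mul Finset.univ _ (Finset.mem_univ t), smul_eq_mul]
  ring

lemma FF_lipschitz {S A : Type*} [Fintype S] [Fintype A] [Nonempty A] (lam : ℝ) (hlam : 0 ≤ lam)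
    (P : S → A → S → ℝ) (hP : ∀ s a, (∀ s', 0 ≤ P s a s') ∧ ∑ s', P s a s' = 1)
    (ρ : S → ℝ) (hρ0 : ∀ s, 0 ≤ ρ s) (hρ1 : ∑ s, ρ s = 1) (r : S → A → ℝ)
    (hr : ∀ s a, 0 ≤ r s a ∧ r s a ≤ 1) (θ v w : S × A → ℝ) (n : ℕ) :
    FF lam r P ρ w n (θ + v) - FF lam r P ρ w n θ ≤
      ((2 * (n+1)^2 + 2 * (n+1)) * (1 + lam * Real.log (Fintype.card A)) + 2 * lam * (n+1)) *
        (eucNorm v * eucNorm w) := by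
  set C := 1 + lam * Real.log (Fintype.card A) with hC
  set N := eucNorm v * eucNorm w with hN
  have hN0 : 0 ≤ N := mul_nonneg (eucNorm_nonneg v) (eucNorm_nonneg w)
  have hd : ∀ x : ℝ, HasDerivAt (fun x : ℝ => FF lam r P ρ w n (θ + x • v))
      (∑ z : Fin (n+1) → S × A,
        ((trajDist P ρ (θ + x • v) z * ∑ l, q (θ + x • v) v (z l)) *
            (cc lam r (θ + x • v) (z (Fin.last n)) * ∑ l, q (θ + x • v) w (z l)) +
          trajDist P ρ (θ + x • v) z *
            ((- (lam * q (θ + x • v) v (z (Fin.last n)))) * (∑ l, q (θ + x • v) w (z l)) +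
              cc lam r (θ + x • v) (z (Fin.last n)) * ∑ l, - hh (θ + x • v) v w (z l)))) x := by
    intro x
    unfold FF
    refine HasDerivAt.fun_sum fun z _ => ?_
    refine (hasDeriv_trajDist P ρ θ v z x).fun_mul (HasDerivAt.fun_mul ?_ ?_)
    · unfold cc
      exact ((hasDeriv_log θ v _ _ x).const_mul lam).const_sub _
    · exact HasDerivAt.fun_sum fun l _ => hasDeriv_q θ v w (z l) x
  have key := norm_image_sub_le_of_norm_deriv_le_segment_01'
    (f := fun x : ℝ => FF lam r P ρ w n (θ + x • v))
    (C := ((2 * (n+1)^2 + 2 * (n+1)) * C + 2 * lam * (n+1)) * N)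
    (fun x _ => (hd x).hasDerivWithinAt) ?_
  · simp only [one_smul, zero_smul, add_zero] at key
    exact (le_abs_self _).trans key
  · intro x _
    generalize θ + x • v = η
    rw [Real.norm_eq_abs]
    refine (Finset.abs_sum_le_sum_abs _ _).trans ?_
    have hc0 : ∀ y, 0 ≤ cc lam r η y := by
      intro y
      have := Real.log_nonpos (softmax_pos η y.1 y.2).le (softmax_le_one η y.1 y.2)
      have := (hr y.1 y.2).1
      unfold cc
      nlinarith
    have hsum : ∑ z : Fin (n+1) → S × A, trajDist P ρ η z * cc lam r η (z (Fin.last n)) ≤ C := by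
      apply sum_last_le P hP ρ hρ0 hρ1
      intro s
      have e : ∀ a ∈ Finset.univ, softmax η s a * cc lam r η (s, a) ≤
          softmax η s a + lam * (softmax η s a * (- Real.log (softmax η s a))) := by
        intro a _
        unfold cc
        have := mul_le_mul_of_nonneg_left (hr s a).2 (softmax_pos η s a).le
        simp only
        linarith
      refine (Finset.sum_le_sum e).trans ?_
      rw [Finset.sum_add_distrib, softmax_sum, ← Finset.mul_sum]
      have := mul_le_mul_of_nonneg_left (entropy_le η s) hlam
      linarith
    have hQ : ∀ (u : S × A → ℝ) (z : Fin (n+1) → S × A),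
        |∑ l, q η u (z l)| ≤ (n+1) * (√2 * eucNorm u) := by
      intro u z
      refine (Finset.abs_sum_le_sum_abs _ _).trans ?_
      refine (Finset.sum_le_sum fun l _ => abs_q_le η u (z l)).trans ?_
      simp
    have hH : ∀ (z : Fin (n+1) → S × A), |∑ l, - hh η v w (z l)| ≤ (n+1) * (2 * N) := by
      intro z
      refine (Finset.abs_sum_le_sum_abs _ _).trans ?_
      refine (Finset.sum_le_sum fun l _ => (abs_neg _).trans_le (abs_hh_le η v w (z l))).trans ?_
      simp [hN]
    have hs2 : √2 * √2 = (2:ℝ) := Real.mul_self_sqrt (by norm_num)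
    have hv0 := eucNorm_nonneg v
    have hw0 := eucNorm_nonneg w
    have hpt : ∀ z ∈ (Finset.univ : Finset (Fin (n+1) → S × A)),
        |(trajDist P ρ η z * ∑ l, q η v (z l)) *
            (cc lam r η (z (Fin.last n)) * ∑ l, q η w (z l)) +
          trajDist P ρ η z *
            ((- (lam * q η v (z (Fin.last n)))) * (∑ l, q η w (z l)) +
              cc lam r η (z (Fin.last n)) * ∑ l, - hh η v w (z l))| ≤
        (trajDist P ρ η z * cc lam r η (z (Fin.last n))) * ((2 * (n+1)^2 + 2 * (n+1)) * N) +
          trajDist P ρ η z * (2 * lam * (n+1) * N) := by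
      intro z _
      have hν := trajDist_nonneg P hP ρ hρ0 η z
      have hc := hc0 (z (Fin.last n))
      have h1 : |(∑ l, q η v (z l)) * ∑ l, q η w (z l)| ≤ 2 * (n+1)^2 * N := by
        rw [abs_mul]
        refine (mul_le_mul (hQ v z) (hQ w z) (abs_nonneg _) (by positivity)).trans_eq ?_
        rw [hN]
        linear_combination ((n:ℝ)+1)^2 * (eucNorm v * eucNorm w) * hs2
      have h2 : |q η v (z (Fin.last n)) * ∑ l, q η w (z l)| ≤ 2 * (n+1) * N := by
        rw [abs_mul]
        refine (mul_le_mul (abs_q_le η v _) (hQ w z) (abs_nonneg _) (by positivity)).trans_eq ?_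
        rw [hN]
        linear_combination ((n:ℝ)+1) * (eucNorm v * eucNorm w) * hs2
      have h3 := hH z
      generalize (∑ l, - hh η v w (z l)) = H at *
      generalize (∑ l, q η v (z l)) = V at *
      generalize (∑ l, q η w (z l)) = W at *
      generalize q η v (z (Fin.last n)) = p at *
      generalize trajDist P ρ η z = ν at *
      generalize cc lam r η (z (Fin.last n)) = c at *
      have e : ν * V * (c * W) + ν * (-(lam * p) * W + c * H) =
        ν * c * (V * W) + (ν * lam) * (-(p * W)) + ν * c * H := by ring
      rw [e]
      have k1 := mul_le_mul_of_nonneg_left h1 (mul_nonneg hν hc)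
      have k2 := mul_le_mul_of_nonneg_left h2 (mul_nonneg hν hlam)
      have k3 := mul_le_mul_of_nonneg_left h3 (mul_nonneg hν hc)
      refine (abs_add_three _ _ _).trans ?_
      rw [abs_mul (ν * c) (V * W), abs_mul (ν * lam), abs_mul (ν * c) H, abs_neg,
        abs_of_nonneg (mul_nonneg hν hc), abs_of_nonneg (mul_nonneg hν hlam)]
      linarith
    refine (Finset.sum_le_sum hpt).trans ?_
    rw [Finset.sum_add_distrib, ← Finset.sum_mul, ← Finset.sum_mul, trajDist_sum P hP ρ hρ1]
    have := mul_le_mul_of_nonneg_right hsum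
      (show 0 ≤ (2 * ((n:ℝ)+1)^2 + 2 * (n+1)) * N by positivity)
    linarith

lemma geom_bound (γ : ℝ) (hγ0 : 0 ≤ γ) (hγ1 : γ < 1) (T : ℕ) :
    ∑ n ∈ Finset.range T, γ ^ n * (((n:ℝ)+1) * (n+2)) ≤ 2 / (1 - γ)^3 := by
  have hd : 0 < 1 - γ := by linarith
  have h : (∑ n ∈ Finset.range T, γ ^ n * (((n:ℝ)+1) * (n+2))) * (1 - γ)^3 =
      2 - γ ^ T * (2 + 2 * T * (1 - γ) + ((T:ℝ)^2 + T) * (1 - γ)^2) := by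
    induction T with
    | zero => simp
    | succ T ih =>
      rw [Finset.sum_range_succ, add_mul, ih]
      push_cast
      ring
  rw [le_div_iff₀ (by positivity), h]
  have : 0 ≤ γ ^ T * (2 + 2 * T * (1 - γ) + ((T:ℝ)^2 + T) * (1 - γ)^2) := by positivity
  linarith

end Stmt12

/-- The expectation of the entropy-regularized single-trajectory
REINFORCE vector under the truncated-trajectory distribution is Lipschitz continuous in `θ`
(with respect to the Euclidean norm). -/
theorem stmt12 {S A : Type*} [Fintype S] [Fintype A] [Nonempty S] [Nonempty A]
    [DecidableEq S] [DecidableEq A]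
    (T : ℕ) (hT : 1 ≤ T)
    (γ : ℝ) (hγ0 : 0 ≤ γ) (hγ1 : γ < 1) (lam : ℝ) (hlam : 0 ≤ lam)
    (P : S → A → S → ℝ) (hP : ∀ s a, (∀ s', 0 ≤ P s a s') ∧ ∑ s', P s a s' = 1)
    (ρ : S → ℝ) (hρ0 : ∀ s, 0 ≤ ρ s) (hρ1 : ∑ s, ρ s = 1)
    (r : S → A → ℝ) (hr : ∀ s a, 0 ≤ r s a ∧ r s a ≤ 1)
    (θ θ' : S × A → ℝ) :
    eucNorm ((∑ z : Fin T → S × A, trajDist P ρ θ z • reinforce γ lam r θ z) -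
        ∑ z : Fin T → S × A, trajDist P ρ θ' z • reinforce γ lam r θ' z) ≤
      ((8 + lam * (4 + 8 * Real.log (Fintype.card A))) / (1 - γ) ^ 3) *
        eucNorm (θ - θ') := by
  classical
  set G := ∑ z : Fin T → S × A, trajDist P ρ θ z • reinforce γ lam r θ z with hG
  set G' := ∑ z : Fin T → S × A, trajDist P ρ θ' z • reinforce γ lam r θ' z with hG'
  set w := G - G' with hw
  set v := θ - θ' with hv
  have hlog : 0 ≤ Real.log (Fintype.card A) := Real.log_natCast_nonneg _
  set D := Real.log (Fintype.card A) with hD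
  have hd : 0 < 1 - γ := by linarith
  have hN0 : 0 ≤ eucNorm v * eucNorm w :=
    mul_nonneg (Stmt12.eucNorm_nonneg v) (Stmt12.eucNorm_nonneg w)
  have h1 : eucNorm w ^ 2 = ∑ n ∈ Finset.range T, γ ^ n *
      (Stmt12.FF lam r P ρ w n (θ' + v) - Stmt12.FF lam r P ρ w n θ') := by
    have e : θ' + v = θ := by rw [hv]; abel
    rw [e, Stmt12.eucNorm_sq]
    simp only [mul_sub, Finset.sum_sub_distrib]
    rw [← Stmt12.inner_G γ lam P hP ρ hρ1 r θ w T, ← Stmt12.inner_G γ lam P hP ρ hρ1 r θ' w T,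
      ← Finset.sum_sub_distrib]
    apply Finset.sum_congr rfl
    intro i _
    rw [← hG, ← hG', ← mul_sub, ← Pi.sub_apply, ← hw, sq]
  have h2 : eucNorm w ^ 2 ≤ ∑ n ∈ Finset.range T, (γ ^ n * (((n:ℝ)+1) * (n+2))) *
      ((4 + lam * (2 + 4 * D)) * (eucNorm v * eucNorm w)) := by
    rw [h1]
    apply Finset.sum_le_sum
    intro n _
    rw [mul_assoc]
    apply mul_le_mul_of_nonneg_left _ (pow_nonneg hγ0 n)
    refine (Stmt12.FF_lipschitz lam hlam P hP ρ hρ0 hρ1 r hr θ' v w n).trans ?_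
    rw [← hD, ← mul_assoc (((n:ℝ)+1) * (n+2))]
    apply mul_le_mul_of_nonneg_right _ hN0
    have hn : (0:ℝ) ≤ n := Nat.cast_nonneg n
    have k1 : 0 ≤ lam * D := mul_nonneg hlam hlog
    have k : ((n:ℝ)+1) * (n+2) * (4 + lam * (2 + 4 * D)) -
      ((2 * ((n:ℝ)+1)^2 + 2 * (n+1)) * (1 + lam * D) + 2 * lam * (n+1)) =
      (n+1) * (n+2) * (2 * (1 + lam * D)) + 2 * lam * ((n+1) * (n+1)) := by ring
    have : 0 ≤ ((n:ℝ)+1) * (n+2) * (2 * (1 + lam * D)) + 2 * lam * ((n+1) * (n+1)) := by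
      positivity
    linarith
  rw [← Finset.sum_mul] at h2
  have h3 : eucNorm w ^ 2 ≤
      ((8 + lam * (4 + 8 * D)) / (1 - γ) ^ 3 * eucNorm v) * eucNorm w := by
    refine h2.trans ((mul_le_mul_of_nonneg_right (Stmt12.geom_bound γ hγ0 hγ1 T)
      (by positivity)).trans_eq ?_)
    ring
  rcases (Stmt12.eucNorm_nonneg w).eq_or_lt with h0 | h0
  · rw [← h0]
    have := Stmt12.eucNorm_nonneg v
    positivity
  · rw [sq] at h3
    exact le_of_mul_le_mul_right h3 h0
end

section
/- Let S and A be nonempty finite sets and let f : ℝ^{S×A} → ℝ be continuously differentiable. Let θ ∈ ℝ^{S×A} and κ : S → [0,1], and define θ' by θ'(s,a) = κ(s)·θ(s,a) for all (s,a); for t ∈ [0,1] set ζ_t = (1−t)·θ + t·θ'. Assume that for every s ∈ S with κ(s) < 1 and every t ∈ [0,1], Σ_{a∈A} ζ_t(s,a)·(∂f/∂θ(s,a))(ζ_t) ≤ 0. Then f(θ') ≥ f(θ). -/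
open scoped BigOperators

/-- If the gradient field is radial (points toward the origin) on each
rescaled block along the segment from `θ` to the blockwise rescaling
`θ' (s,a) = κ s * θ (s,a)`, then the rescaling does not decrease the objective. -/
theorem stmt16 {S A : Type*} [Fintype S] [Fintype A] [Nonempty S] [Nonempty A]
    [DecidableEq S] [DecidableEq A]
    (f : (S × A → ℝ) → ℝ) (hf : ContDiff ℝ 1 f)
    (θ : S × A → ℝ) (κ : S → ℝ) (hκ : ∀ s, 0 ≤ κ s ∧ κ s ≤ 1)
    (hrad : ∀ s, κ s < 1 → ∀ t : ℝ, 0 ≤ t → t ≤ 1 →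
      ∑ a : A,
          ((1 - t) • θ + t • (fun p : S × A => κ p.1 * θ p)) (s, a) *
            fderiv ℝ f ((1 - t) • θ + t • (fun p : S × A => κ p.1 * θ p))
              (Pi.single (s, a) 1) ≤ 0) :
    f θ ≤ f (fun p : S × A => κ p.1 * θ p) := by
  set θ' : S × A → ℝ := fun p : S × A => κ p.1 * θ p with hθ'
  have hd : ∀ t : ℝ, HasDerivAt (fun t : ℝ => f ((1 - t) • θ + t • θ'))
      (fderiv ℝ f ((1 - t) • θ + t • θ') (θ' - θ)) t := by
    intro t
    have h1 : HasDerivAt (fun t : ℝ => (1 - t) • θ + t • θ') (θ' - θ) t := by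
      have h := (((hasDerivAt_id t).const_sub 1).smul_const θ).add
        ((hasDerivAt_id t).smul_const θ')
      have e : (-1 : ℝ) • θ + (1 : ℝ) • θ' = θ' - θ := by
        rw [neg_smul, one_smul, one_smul]; abel
      rw [e] at h
      exact h
    have h2 := (hf.differentiable (by norm_num) ((1 - t) • θ + t • θ')).hasFDerivAt
    exact h2.comp_hasDerivAt t h1
  have hmono : MonotoneOn (fun t : ℝ => f ((1 - t) • θ + t • θ')) (Set.Icc 0 1) := by
    apply monotoneOn_of_deriv_nonneg (convex_Icc 0 1)
    · exact fun t _ => (hd t).continuousAt.continuousWithinAt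
    · exact fun t _ => (hd t).differentiableAt.differentiableWithinAt
    · intro t ht
      rw [interior_Icc] at ht
      obtain ⟨ht0, ht1⟩ := ht
      rw [(hd t).deriv]
      set L := fderiv ℝ f ((1 - t) • θ + t • θ') with hL
      have hexp : L (θ' - θ) = ∑ s : S, (κ s - 1) * ∑ a : A, θ (s, a) * L (Pi.single (s, a) 1) := by
        conv_lhs => rw [pi_eq_sum_univ' (θ' - θ)]
        rw [map_sum, Fintype.sum_prod_type]
        refine Finset.sum_congr rfl fun s _ => ?_
        rw [Finset.mul_sum]
        refine Finset.sum_congr rfl fun a _ => ?_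
        rw [map_smul, smul_eq_mul]
        simp only [hθ', Pi.sub_apply]
        ring
      rw [hexp]
      refine Finset.sum_nonneg fun s _ => ?_
      rcases (hκ s).2.lt_or_eq with hs | hs
      · have h := hrad s hs t ht0.le ht1.le
        have e : ∑ a : A, ((1 - t) • θ + t • θ') (s, a) * L (Pi.single (s, a) 1)
            = (1 - t + t * κ s) * ∑ a : A, θ (s, a) * L (Pi.single (s, a) 1) := by
          rw [Finset.mul_sum]
          refine Finset.sum_congr rfl fun a _ => ?_
          simp only [hθ', Pi.add_apply, Pi.smul_apply, smul_eq_mul]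
          ring
        rw [e] at h
        have hc : 0 < 1 - t + t * κ s := by
          have := mul_nonneg ht0.le (hκ s).1
          linarith
        have h3 := nonpos_of_mul_nonpos_right h hc
        exact mul_nonneg_of_nonpos_of_nonpos (by linarith) h3
      · simp [hs]
  have := hmono (Set.left_mem_Icc.2 zero_le_one) (Set.right_mem_Icc.2 zero_le_one) zero_le_one
  simpa using this
end

section
/- There exist nonempty finite sets S and A, a reward r : S×A → [0,1], a discount γ ∈ (0,1), a probability distribution ρ on S, and two transition kernels P₁ and P₂ on S×A (each P_i(·|s,a) a probability distribution on S) with the following property: for every deterministic policy δ : S → A there exists a stationary stochastic policy π (π(a|s) ≥ 0, Σ_{a∈A} π(a|s) = 1) such that, whenever V₁, V₂, W₁, W₂ : S → ℝ satisfy the Bellman equations V_i(s) = r(s,δ(s)) + γ·Σ_{s'∈S} P_i(s'|s,δ(s))·V_i(s') and W_i(s) = Σ_{a∈A} π(a|s)·( r(s,a) + γ·Σ_{s'∈S} P_i(s'|s,a)·W_i(s') ) for i ∈ {1,2} and all s ∈ S, one has (1/2)·Σ_{s} ρ(s)·(W₁(s) + W₂(s)) > (1/2)·Σ_{s} ρ(s)·(V₁(s)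 + V₂(s)). In particular, in this two-agent federated reinforcement learning instance, the maximum of the federated objective over deterministic stationary policies is strictly smaller than its supremum over stationary stochastic policies. -/
open scoped BigOperators

/-- There exists a two-agent federated reinforcement learning instance
(two MDPs sharing states, actions, rewards, discount and initial distribution, but with
different transition kernels) in which every deterministic stationary policy is strictly
beaten by some stationary stochastic policy for the federated objective. -/
theorem stmt17 :
    ∃ (nS nA : ℕ), 0 < nS ∧ 0 < nA ∧
    ∃ (r : Fin nS → Fin nA → ℝ) (γ : ℝ) (ρ : Fin nS → ℝ)
      (P₁ P₂ : Fin nS → Fin nA → Fin nS → ℝ),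
      (∀ s a, 0 ≤ r s a ∧ r s a ≤ 1) ∧
      (0 < γ ∧ γ < 1) ∧
      (∀ s, 0 ≤ ρ s) ∧ (∑ s, ρ s = 1) ∧
      (∀ s a, (∀ s', 0 ≤ P₁ s a s') ∧ ∑ s', P₁ s a s' = 1) ∧
      (∀ s a, (∀ s', 0 ≤ P₂ s a s') ∧ ∑ s', P₂ s a s' = 1) ∧
      ∀ δ : Fin nS → Fin nA, ∃ π : Fin nS → Fin nA → ℝ,
        (∀ s a, 0 ≤ π s a) ∧ (∀ s, ∑ a, π s a = 1) ∧
        ∀ V₁ V₂ W₁ W₂ : Fin nS → ℝ,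
          (∀ s, V₁ s = r s (δ s) + γ * ∑ s', P₁ s (δ s) s' * V₁ s') →
          (∀ s, V₂ s = r s (δ s) + γ * ∑ s', P₂ s (δ s) s' * V₂ s') →
          (∀ s, W₁ s = ∑ a, π s a * (r s a + γ * ∑ s', P₁ s a s' * W₁ s')) →
          (∀ s, W₂ s = ∑ a, π s a * (r s a + γ * ∑ s', P₂ s a s' * W₂ s')) →
          (1 / 2) * ∑ s, ρ s * (V₁ s + V₂ s) < (1 / 2) * ∑ s, ρ s * (W₁ s + W₂ s) := by
  refine ⟨2, 2, by norm_num, by norm_num, ![![0, 0], ![1, 1]], 1 / 2, ![1, 0],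
    ![![![0, 1], ![1, 0]], ![![0, 1], ![0, 1]]],
    ![![![1, 0], ![0, 1]], ![![0, 1], ![0, 1]]], ?_, by norm_num, ?_, ?_, ?_, ?_, ?_⟩
  · intro s a
    fin_cases s <;> fin_cases a <;> simp
  · intro s
    fin_cases s <;> simp
  · simp
  · intro s a
    fin_cases s <;> fin_cases a <;> simp
  · intro s a
    fin_cases s <;> fin_cases a <;> simp
  · intro δ
    refine ⟨fun _ _ => 1 / 2, fun _ _ => by norm_num, fun _ => by norm_num, ?_⟩
    intro V₁ V₂ W₁ W₂ h₁ h₂ k₁ k₂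
    have a0 := h₁ 0
    have a1 := h₁ 1
    have b0 := h₂ 0
    have b1 := h₂ 1
    have c0 := k₁ 0
    have c1 := k₁ 1
    have d0 := k₂ 0
    have d1 := k₂ 1
    generalize δ 0 = x at *
    generalize δ 1 = y at *
    clear h₁ h₂ k₁ k₂
    fin_cases x <;> fin_cases y <;> simp [Fin.sum_univ_two] at * <;> linarith
end
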